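/- Suppose: (i) the model is data uniformly relevant (DUR): there exist d, k > 0 such that for all |θ| > k, |∫_ℝ x·π(x | θ) dx| ≤ |θ| − d; (ii) the non-centred parametrisation is geometrically tight in parameter (GTIP): there exist a, b > 0 such that for every θ ∈ ℝ and every t ≥ 0, ∫_{{x : |x − θ| > t}} π(x | θ) dx ≤ a·e^{−b·t}. Then there exists α₀ > 0 such that for every α ∈ (0, α₀) there is a constant K with 0 < K < ∞ such that for all θ with |θ| > k, ∫_ℝ e^{α |x|} π(x | θ) dx ≤ e^{α |θ|}(1 − α d/2) + K. -/

import Mathlib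

open MeasureTheory Filter Set

noncomputable section

/-- Joint (unnormalised posterior) density `f_θ(x) = f₁(y - x) · f₂(x - θ)`. -/
def fjoint (f₁ f₂ : ℝ → ℝ) (y θ x : ℝ) : ℝ := f₁ (y - x) * f₂ (x - θ)

/-- Normalising constant `c_θ = ∫ f_θ(x) dx`. -/
def cnorm (f₁ f₂ : ℝ → ℝ) (y θ : ℝ) : ℝ := ∫ x, fjoint f₁ f₂ y θ x

/-- Conditional posterior density `π(x | θ) = f_θ(x)/c_θ`. -/
def post (f₁ f₂ : ℝ → ℝ) (y θ x : ℝ) : ℝ := fjoint f₁ f₂ y θ x / cnorm f₁ f₂ y θ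

/-- One-step transition density of the marginal Θ-chain of the centred Gibbs sampler:
`p(θ₀, θ₁) = (1/c_{θ₀}) ∫ f₂(x - θ₁) f_{θ₀}(x) dx`. -/
def gibbsTrans (f₁ f₂ : ℝ → ℝ) (y θ₀ θ₁ : ℝ) : ℝ :=
  (1 / cnorm f₁ f₂ y θ₀) * ∫ x, f₂ (x - θ₁) * fjoint f₁ f₂ y θ₀ x

/-- `n`-step transition density (for `n ≥ 1`; the value at `n = 0` is unused). -/
def gibbsTransN (f₁ f₂ : ℝ → ℝ) (y : ℝ) : ℕ → ℝ → ℝ → ℝ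
  | 0, _, _ => 0
  | 1, θ₀, θ₁ => gibbsTrans f₁ f₂ y θ₀ θ₁
  | (n + 2), θ₀, θ₁ => ∫ u, gibbsTransN f₁ f₂ y (n + 1) θ₀ u * gibbsTrans f₁ f₂ y u θ₁

/-!
Write `e^{α|x|} ≤ e^{αx} + e^{-αx}` and, by symmetry, take `θ ≥ 0`. Geometric tightness bounds
`E e^{γ|X - θ|}` uniformly in `θ` for some `γ > 0`. Hence `E e^{-αX} ≤ E e^{α|X - θ|}` contributes
only a constant, while a second-order expansion of the exponential gives
`E e^{αX} ≤ e^{αθ} (1 + α (E X - θ) + O(α²)) ≤ e^{αθ} (1 - αd + O(α²))` with a uniform `O(α²)`,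
which is at most `αd/2` once `α` is small.
-/

open Real

section Pointwise

lemma exp_le_one_add_add_sq_mul_exp_abs (u : ℝ) : exp u ≤ 1 + u + u ^ 2 * exp |u| := by
  have taylor := Complex.norm_exp_sub_sum_le_norm_mul_exp u 2
  simp only [Finset.sum_range_succ, Finset.sum_range_zero, pow_zero, pow_one, Nat.factorial,
    Nat.cast_one, mul_one, div_one, zero_add] at taylor
  norm_cast at taylor
  simp only [norm_eq_abs, sq_abs] at taylor
  linarith [le_abs_self (exp u - (1 + u))]

lemma sq_le_mul_exp_mul_abs {β : ℝ} (hβ : 0 < β) (u : ℝ) :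
    u ^ 2 ≤ 2 / β ^ 2 * exp (β * |u|) :=
  calc u ^ 2 = 2 / β ^ 2 * ((β * |u|) ^ 2 / Nat.factorial 2) := by
        rw [mul_pow, sq_abs, Nat.factorial_two]
        field_simp
        norm_num
    _ ≤ 2 / β ^ 2 * exp (β * |u|) := by
        gcongr
        exact pow_div_factorial_le_exp _ (by positivity) 2

lemma exp_mul_le_one_add_mul_add_sq_mul_exp {α β : ℝ} (hβ : 0 < β) (hα : |α| ≤ β) (u : ℝ) :
    exp (α * u) ≤ 1 + α * u + α ^ 2 * (2 / β ^ 2) * exp (2 * β * |u|) := by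
  have remainder : (α * u) ^ 2 * exp |α * u| ≤ α ^ 2 * (2 / β ^ 2) * exp (2 * β * |u|) :=
    calc (α * u) ^ 2 * exp |α * u| = α ^ 2 * (u ^ 2 * exp (|α| * |u|)) := by
          rw [abs_mul]
          ring
      _ ≤ α ^ 2 * (2 / β ^ 2 * exp (β * |u|) * exp (β * |u|)) := by
          gcongr
          exact sq_le_mul_exp_mul_abs hβ u
      _ = α ^ 2 * (2 / β ^ 2) * exp (2 * β * |u|) := by
          rw [mul_assoc _ (exp _), ← exp_add]
          ring_nf
  linarith [exp_le_one_add_add_sq_mul_exp_abs (α * u)]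

lemma exp_mul_abs_le_exp_mul_add_exp_mul_abs_sub {α γ c : ℝ} (hα : 0 ≤ α) (hαγ : α ≤ γ)
    (hc : 0 ≤ c) (x : ℝ) :
    exp (α * |x|) ≤ exp (α * c) * exp (α * (x - c)) + exp (γ * |x - c|) := by
  have opposite_sign : -(α * x) ≤ γ * |x - c| :=
    calc -(α * x) ≤ α * -(x - c) := by linarith [mul_nonneg hα hc]
      _ ≤ α * |x - c| := by
          gcongr
          exact neg_le_abs _
      _ ≤ γ * |x - c| := by gcongr
  calc exp (α * |x|) = exp |α * x| := by rw [abs_mul, abs_of_nonneg hα]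
    _ ≤ exp (α * x) + exp (-(α * x)) := exp_abs_le _
    _ ≤ exp (α * c) * exp (α * (x - c)) + exp (γ * |x - c|) := by
        rw [← exp_add, ← mul_add, add_sub_cancel]
        gcongr

end Pointwise

section ExponentialTail

variable {Ω : Type*} [MeasurableSpace Ω] {μ : Measure Ω} {X : Ω → ℝ} {a b β : ℝ}

lemma exp_mul_sub_one_nonneg_ae (hX_nonneg : 0 ≤ᵐ[μ] X) (hβ : 0 ≤ β) :
    0 ≤ᵐ[μ] fun ω ↦ exp (β * X ω) - 1 := by
  filter_upwards [hX_nonneg] with ω hω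
  exact sub_nonneg.2 (one_le_exp (mul_nonneg hβ hω))

lemma lintegral_exp_mul_sub_one_le_of_tail [IsFiniteMeasure μ] (hX : AEMeasurable X μ)
    (hX_nonneg : 0 ≤ᵐ[μ] X) (hβ : 0 ≤ β) (hβb : β < b)
    (htail : ∀ t, 0 ≤ t → μ.real {ω | t < X ω} ≤ a * exp (-b * t)) :
    ∫⁻ ω, ENNReal.ofReal (exp (β * X ω) - 1) ∂μ ≤ ENNReal.ofReal (a * (β / (b - β))) := by
  have exp_sub_one_eq (s : ℝ) : exp (β * s) - 1 = ∫ t in (0 : ℝ)..s, β * exp (β * t) := by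
    simp [intervalIntegral.integral_const_mul, intervalIntegral.mul_integral_comp_mul_left]
  have integrable_decay : IntegrableOn (fun t ↦ β * exp (-(b - β) * t)) (Ioi 0) :=
    (integrableOn_exp_mul_Ioi (by linarith) 0).const_mul β
  have integral_decay : ∫ t in Ioi (0 : ℝ), β * exp (-(b - β) * t) = β / (b - β) := by
    rw [integral_const_mul, integral_exp_mul_Ioi (by linarith)]
    rw [mul_zero, exp_zero, neg_div_neg_eq, mul_one_div]
  simp only [exp_sub_one_eq]
  rw [lintegral_comp_eq_lintegral_meas_lt_mul μ hX_nonneg hX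
    (fun t _ ↦ Continuous.intervalIntegrable (by fun_prop) _ _)
    (Eventually.of_forall fun t ↦ by positivity)]
  calc ∫⁻ t in Ioi (0 : ℝ), μ {ω | t < X ω} * ENNReal.ofReal (β * exp (β * t))
      ≤ ∫⁻ t in Ioi (0 : ℝ), ENNReal.ofReal a * ENNReal.ofReal (β * exp (-(b - β) * t)) := by
        refine setLIntegral_mono (by fun_prop) fun t ht ↦ ?_
        have exp_split : exp (-(b - β) * t) = exp (-b * t) * exp (β * t) := by
          rw [← exp_add]
          ring_nf
        grw [← ofReal_measureReal, htail t (le_of_lt ht)]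
        rw [← ENNReal.ofReal_mul' (by positivity), ← ENNReal.ofReal_mul' (by positivity),
          exp_split, mul_assoc a, mul_left_comm β]
    _ = ENNReal.ofReal (a * (β / (b - β))) := by
        rw [lintegral_const_mul _ (by fun_prop), ← ofReal_integral_eq_lintegral_ofReal
          integrable_decay (Eventually.of_forall fun t ↦ by positivity), integral_decay,
          ENNReal.ofReal_mul' (div_nonneg hβ (by linarith))]

lemma integrable_exp_mul_of_tail [IsFiniteMeasure μ] (hX : AEMeasurable X μ)
    (hX_nonneg : 0 ≤ᵐ[μ] X) (hβ : 0 ≤ β) (hβb : β < b)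
    (htail : ∀ t, 0 ≤ t → μ.real {ω | t < X ω} ≤ a * exp (-b * t)) :
    Integrable (fun ω ↦ exp (β * X ω)) μ := by
  have integrable_sub_one : Integrable (fun ω ↦ exp (β * X ω) - 1) μ := by
    refine ⟨by fun_prop, ?_⟩
    rw [hasFiniteIntegral_iff_ofReal (exp_mul_sub_one_nonneg_ae hX_nonneg hβ)]
    exact (lintegral_exp_mul_sub_one_le_of_tail hX hX_nonneg hβ hβb htail).trans_lt
      ENNReal.ofReal_lt_top
  simpa only [sub_eq_add_neg, integrable_add_const_iff] using integrable_sub_one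

lemma integral_exp_mul_le_of_tail [IsProbabilityMeasure μ] (hX : AEMeasurable X μ)
    (hX_nonneg : 0 ≤ᵐ[μ] X) (hβ : 0 ≤ β) (hβb : β < b)
    (htail : ∀ t, 0 ≤ t → μ.real {ω | t < X ω} ≤ a * exp (-b * t)) :
    ∫ ω, exp (β * X ω) ∂μ ≤ 1 + a * (β / (b - β)) := by
  have ha : 0 ≤ a := by simpa using measureReal_nonneg.trans (htail 0 le_rfl)
  have integral_sub_one_le : ∫ ω, (exp (β * X ω) - 1) ∂μ ≤ a * (β / (b - β)) := by
    rw [integral_eq_lintegral_of_nonneg_ae (exp_mul_sub_one_nonneg_ae hX_nonneg hβ)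
      (by fun_prop)]
    exact ENNReal.toReal_le_of_le_ofReal (mul_nonneg ha (div_nonneg hβ (by linarith)))
      (lintegral_exp_mul_sub_one_le_of_tail hX hX_nonneg hβ hβb htail)
  rw [integral_sub (integrable_exp_mul_of_tail hX hX_nonneg hβ hβb htail) (integrable_const 1),
    integral_const, probReal_univ, one_smul] at integral_sub_one_le
  linarith

end ExponentialTail

section Drift

variable {Ω : Type*} [MeasurableSpace Ω] {μ : Measure Ω}
  {X : Ω → ℝ} {a b c d α β γ M : ℝ}

lemma integrable_of_integrable_exp_mul_abs (hX : AEMeasurable X μ) (hγ : 0 < γ)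
    (hexp : Integrable (fun ω ↦ exp (γ * |X ω|)) μ) : Integrable X μ := by
  refine (hexp.const_mul γ⁻¹).mono' hX.aestronglyMeasurable (Eventually.of_forall fun ω ↦ ?_)
  calc ‖X ω‖ = γ⁻¹ * (γ * |X ω|) := by rw [inv_mul_cancel_left₀ hγ.ne', norm_eq_abs]
    _ ≤ γ⁻¹ * exp (γ * |X ω|) := by
        gcongr
        linarith [add_one_le_exp (γ * |X ω|)]

lemma integrable_exp_mul_of_integrable_exp_mul_abs (hX : AEMeasurable X μ) (hα : |α| ≤ γ)
    (hexp : Integrable (fun ω ↦ exp (γ * |X ω|)) μ) : Integrable (fun ω ↦ exp (α * X ω)) μ := by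
  refine hexp.mono' (by fun_prop) (Eventually.of_forall fun ω ↦ ?_)
  calc ‖exp (α * X ω)‖ = exp (α * X ω) := norm_of_nonneg (exp_pos _).le
    _ ≤ exp |α * X ω| := by
        gcongr
        exact le_abs_self _
    _ ≤ exp (γ * |X ω|) := by
        rw [abs_mul]
        gcongr

variable [IsProbabilityMeasure μ]

lemma integral_exp_mul_le_one_add_mul_integral_add (hX : AEMeasurable X μ) (hβ : 0 < β)
    (hα : |α| ≤ β) (hexp : Integrable (fun ω ↦ exp (2 * β * |X ω|)) μ) :
    ∫ ω, exp (α * X ω) ∂μ ≤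
      1 + α * ∫ ω, X ω ∂μ + α ^ 2 * (2 / β ^ 2) * ∫ ω, exp (2 * β * |X ω|) ∂μ := by
  have integrable_X := integrable_of_integrable_exp_mul_abs hX (by positivity) hexp
  have integrable_affine : Integrable (fun ω ↦ 1 + α * X ω) μ :=
    (integrable_const 1).add (integrable_X.const_mul α)
  calc ∫ ω, exp (α * X ω) ∂μ
      ≤ ∫ ω, (1 + α * X ω + α ^ 2 * (2 / β ^ 2) * exp (2 * β * |X ω|)) ∂μ :=
        integral_mono (integrable_exp_mul_of_integrable_exp_mul_abs hX (by linarith) hexp)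
          (integrable_affine.add (hexp.const_mul _))
          fun ω ↦ exp_mul_le_one_add_mul_add_sq_mul_exp hβ hα (X ω)
    _ = 1 + α * ∫ ω, X ω ∂μ + α ^ 2 * (2 / β ^ 2) * ∫ ω, exp (2 * β * |X ω|) ∂μ := by
        rw [integral_add integrable_affine (hexp.const_mul _),
          integral_add (integrable_const 1) (integrable_X.const_mul α), integral_const_mul,
          integral_const_mul, integral_const, probReal_univ, one_smul]

lemma integral_exp_mul_sub_le_of_integral_le (hX : AEMeasurable X μ) (hβ : 0 < β)
    (hα : 0 ≤ α) (hαβ : α ≤ β) (hexp : Integrable (fun ω ↦ exp (2 * β * |X ω - c|)) μ)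
    (hM : ∫ ω, exp (2 * β * |X ω - c|) ∂μ ≤ M) (hmean : ∫ ω, X ω ∂μ ≤ c - d)
    (hαM : α * (2 / β ^ 2 * M) ≤ d / 2) :
    ∫ ω, exp (α * (X ω - c)) ∂μ ≤ 1 - α * d / 2 := by
  have integrable_sub : Integrable (fun ω ↦ X ω - c) μ :=
    integrable_of_integrable_exp_mul_abs (hX.sub_const c) (by positivity) hexp
  have integral_sub_le : ∫ ω, (X ω - c) ∂μ ≤ -d := by
    have integrable_X : Integrable X μ := by
      simpa only [sub_eq_add_neg, integrable_add_const_iff] using integrable_sub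
    rw [integral_sub integrable_X (integrable_const c), integral_const, probReal_univ, one_smul]
    linarith
  calc ∫ ω, exp (α * (X ω - c)) ∂μ
      ≤ 1 + α * ∫ ω, (X ω - c) ∂μ +
          α ^ 2 * (2 / β ^ 2) * ∫ ω, exp (2 * β * |X ω - c|) ∂μ :=
        integral_exp_mul_le_one_add_mul_integral_add (hX.sub_const c) hβ
          ((abs_of_nonneg hα).trans_le hαβ) hexp
    _ ≤ 1 + α * (-d) + α ^ 2 * (2 / β ^ 2) * M := by gcongr
    _ = 1 + α * (-d) + α * (α * (2 / β ^ 2 * M)) := by ring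
    _ ≤ 1 + α * (-d) + α * (d / 2) := by gcongr
    _ = 1 - α * d / 2 := by ring

lemma integral_exp_mul_abs_le_of_integral_le (hX : AEMeasurable X μ) (hc : 0 ≤ c) (hβ : 0 < β)
    (hα : 0 ≤ α) (hαβ : α ≤ β) (hexp : Integrable (fun ω ↦ exp (2 * β * |X ω - c|)) μ)
    (hM : ∫ ω, exp (2 * β * |X ω - c|) ∂μ ≤ M) (hmean : ∫ ω, X ω ∂μ ≤ c - d)
    (hαM : α * (2 / β ^ 2 * M) ≤ d / 2) :
    ∫ ω, exp (α * |X ω|) ∂μ ≤ exp (α * c) * (1 - α * d / 2) + M := by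
  have integrable_exp_sub : Integrable (fun ω ↦ exp (α * (X ω - c))) μ :=
    integrable_exp_mul_of_integrable_exp_mul_abs (hX.sub_const c)
      (by rw [abs_of_nonneg hα]; linarith) hexp
  calc ∫ ω, exp (α * |X ω|) ∂μ
      ≤ ∫ ω, (exp (α * c) * exp (α * (X ω - c)) + exp (2 * β * |X ω - c|)) ∂μ :=
        integral_mono_of_nonneg (Eventually.of_forall fun ω ↦ (exp_pos _).le)
          ((integrable_exp_sub.const_mul _).add hexp) (Eventually.of_forall fun ω ↦
            exp_mul_abs_le_exp_mul_add_exp_mul_abs_sub hα (by linarith) hc (X ω))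
    _ = exp (α * c) * ∫ ω, exp (α * (X ω - c)) ∂μ + ∫ ω, exp (2 * β * |X ω - c|) ∂μ := by
        rw [integral_add (integrable_exp_sub.const_mul _) hexp, integral_const_mul]
    _ ≤ exp (α * c) * (1 - α * d / 2) + M := by
        gcongr
        exact integral_exp_mul_sub_le_of_integral_le hX hβ hα hαβ hexp hM hmean hαM

lemma integral_exp_mul_abs_le_of_abs_integral_le (hX : AEMeasurable X μ) (hβ : 0 < β)
    (hα : 0 ≤ α) (hαβ : α ≤ β) (hexp : Integrable (fun ω ↦ exp (2 * β * |X ω - c|)) μ)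
    (hM : ∫ ω, exp (2 * β * |X ω - c|) ∂μ ≤ M) (hmean : |∫ ω, X ω ∂μ| ≤ |c| - d)
    (hαM : α * (2 / β ^ 2 * M) ≤ d / 2) :
    ∫ ω, exp (α * |X ω|) ∂μ ≤ exp (α * |c|) * (1 - α * d / 2) + M := by
  rcases le_total 0 c with hc | hc
  · rw [abs_of_nonneg hc] at hmean ⊢
    exact integral_exp_mul_abs_le_of_integral_le hX hc hβ hα hαβ hexp hM
      ((le_abs_self _).trans hmean) hαM
  · have abs_neg_sub_neg (x : ℝ) : |-x - -c| = |x - c| := by rw [neg_sub_neg, abs_sub_comm]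
    rw [abs_of_nonpos hc] at hmean ⊢
    simpa only [abs_neg] using
      integral_exp_mul_abs_le_of_integral_le (X := fun ω ↦ -X ω) hX.neg (neg_nonneg.2 hc) hβ hα
        hαβ (by simpa only [abs_neg_sub_neg] using hexp)
        (by simpa only [abs_neg_sub_neg] using hM)
        (by simpa only [integral_neg] using (neg_le_abs _).trans hmean) hαM

lemma integral_exp_mul_abs_le_of_tail (hX : AEMeasurable X μ) (hb : 0 < b) (hα : 0 ≤ α)
    (hαb : α ≤ b / 4) (hαd : α * (32 / b ^ 2 * (1 + a)) ≤ d / 2)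
    (hmean : |∫ ω, X ω ∂μ| ≤ |c| - d)
    (htail : ∀ t, 0 ≤ t → μ.real {ω | t < |X ω - c|} ≤ a * exp (-b * t)) :
    ∫ ω, exp (α * |X ω|) ∂μ ≤ exp (α * |c|) * (1 - α * d / 2) + (1 + a) := by
  have hdist : AEMeasurable (fun ω ↦ |X ω - c|) μ := by fun_prop
  have hdist_nonneg : 0 ≤ᵐ[μ] fun ω ↦ |X ω - c| := .of_forall fun ω ↦ abs_nonneg _
  have hexp : Integrable (fun ω ↦ exp (2 * (b / 4) * |X ω - c|)) μ :=
    integrable_exp_mul_of_tail hdist hdist_nonneg (by positivity) (by linarith) htail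
  have hM : ∫ ω, exp (2 * (b / 4) * |X ω - c|) ∂μ ≤ 1 + a * (2 * (b / 4) / (b - 2 * (b / 4))) :=
    integral_exp_mul_le_of_tail hdist hdist_nonneg (by positivity) (by linarith) htail
  have moment_ratio_eq : 2 * (b / 4) / (b - 2 * (b / 4)) = 1 := by
    field_simp
    norm_num
  have remainder_constant_eq : 2 / (b / 4) ^ 2 = 32 / b ^ 2 := by
    field_simp
    norm_num
  rw [moment_ratio_eq, mul_one] at hM
  exact integral_exp_mul_abs_le_of_abs_integral_le hX (by positivity) hα hαb hexp hM hmean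
    (by rwa [remainder_constant_eq])

end Drift

section Density

variable {Ω : Type*} [MeasurableSpace Ω] {ν : Measure Ω} {p : Ω → ℝ}

lemma integral_withDensity_ofReal (hp : AEMeasurable p ν) (hp_nonneg : 0 ≤ᵐ[ν] p) (g : Ω → ℝ) :
    ∫ x, g x ∂ν.withDensity (fun x ↦ ENNReal.ofReal (p x)) = ∫ x, g x * p x ∂ν := by
  rw [integral_withDensity_eq_integral_toReal_smul₀ hp.ennreal_ofReal
    (Eventually.of_forall fun _ ↦ ENNReal.ofReal_lt_top)]
  refine integral_congr_ae ?_
  filter_upwards [hp_nonneg] with x hx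
  rw [ENNReal.toReal_ofReal hx, smul_eq_mul, mul_comm]

lemma measureReal_withDensity_ofReal (hp : AEMeasurable p ν) (hp_nonneg : 0 ≤ᵐ[ν] p)
    {s : Set Ω} (hs : MeasurableSet s) :
    (ν.withDensity fun x ↦ ENNReal.ofReal (p x)).real s = ∫ x in s, p x ∂ν := by
  rw [measureReal_def, withDensity_apply _ hs, integral_eq_lintegral_of_nonneg_ae
    (ae_restrict_of_ae hp_nonneg) hp.aestronglyMeasurable.restrict]

lemma isProbabilityMeasure_withDensity_ofReal (hp_nonneg : 0 ≤ᵐ[ν] p)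
    (hp_one : ∫ x, p x ∂ν = 1) :
    IsProbabilityMeasure (ν.withDensity fun x ↦ ENNReal.ofReal (p x)) := by
  have hp : Integrable p ν := .of_integral_ne_zero (hp_one ▸ one_ne_zero)
  rw [isProbabilityMeasure_iff_real, measureReal_withDensity_ofReal hp.aemeasurable hp_nonneg .univ,
    setIntegral_univ, hp_one]

end Density

section Posterior

variable {f₁ f₂ : ℝ → ℝ} {y θ : ℝ}

lemma post_nonneg (hf₁ : 0 ≤ f₁) (hf₂ : 0 ≤ f₂) (x : ℝ) : 0 ≤ post f₁ f₂ y θ x :=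
  have fjoint_nonneg (z : ℝ) : 0 ≤ fjoint f₁ f₂ y θ z := mul_nonneg (hf₁ _) (hf₂ _)
  div_nonneg (fjoint_nonneg x) (integral_nonneg fjoint_nonneg)

lemma integral_post (hc : cnorm f₁ f₂ y θ ≠ 0) : ∫ x, post f₁ f₂ y θ x = 1 := by
  simp only [post, integral_div]
  exact div_self hc

end Posterior

theorem dur_gtip_absolute_exponential_moment_bound_general {ν : Measure ℝ} {p : ℝ → ℝ → ℝ}
    {S : Set ℝ} {a b d : ℝ} (hp_nonneg : ∀ θ ∈ S, 0 ≤ᵐ[ν] p θ)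
    (hp_one : ∀ θ ∈ S, ∫ x, p θ x ∂ν = 1) (ha : 0 < a) (hb : 0 < b) (hd : 0 < d)
    (hDUR : ∀ θ ∈ S, |∫ x, x * p θ x ∂ν| ≤ |θ| - d)
    (hGTIP : ∀ θ ∈ S, ∀ t, 0 ≤ t → ∫ x in {x | t < |x - θ|}, p θ x ∂ν ≤ a * exp (-b * t)) :
    ∃ α₀ > 0, ∃ K > 0, ∀ α, 0 < α → α < α₀ → ∀ θ ∈ S,
      ∫ x, exp (α * |x|) * p θ x ∂ν ≤ exp (α * |θ|) * (1 - α * d / 2) + K := by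
  have hC : 0 < 32 / b ^ 2 * (1 + a) := by positivity
  refine ⟨min (b / 4) (d / 2 / (32 / b ^ 2 * (1 + a))), by positivity, 1 + a, by positivity,
    fun α hα hα_lt θ hθ ↦ ?_⟩
  obtain ⟨hαb, hαd⟩ := lt_min_iff.1 hα_lt
  have hp : AEMeasurable (p θ) ν :=
    (Integrable.of_integral_ne_zero (hp_one θ hθ ▸ one_ne_zero)).aemeasurable
  have := isProbabilityMeasure_withDensity_ofReal (hp_nonneg θ hθ) (hp_one θ hθ)
  rw [← integral_withDensity_ofReal hp (hp_nonneg θ hθ)]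
  refine integral_exp_mul_abs_le_of_tail aemeasurable_id' hb hα.le hαb.le
    ((lt_div_iff₀ hC).1 hαd).le ?_ fun t ht ↦ ?_
  · rw [integral_withDensity_ofReal hp (hp_nonneg θ hθ)]
    exact hDUR θ hθ
  · rw [measureReal_withDensity_ofReal hp (hp_nonneg θ hθ)
      (measurableSet_lt measurable_const (by fun_prop))]
    exact hGTIP θ hθ t ht

/-- Lemma on absolute exponential drift: under DUR (with constants `d, k`)
and GTIP of the non-centred parametrisation, for all sufficiently small `α > 0` there is a
finite constant `K > 0` with
`∫ e^{α|x|} π(x|θ) dx ≤ e^{α|θ|}(1 - αd/2) + K` for all `|θ| > k`. -/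
theorem dur_gtip_absolute_exponential_moment_bound (f₁ f₂ : ℝ → ℝ) (y : ℝ)
    (hf₁c : Continuous f₁) (hf₂c : Continuous f₂)
    (hf₁pos : ∀ t, 0 < f₁ t) (hf₂pos : ∀ t, 0 < f₂ t)
    (hf₁bdd : ∃ M, ∀ t, f₁ t ≤ M) (hf₂bdd : ∃ M, ∀ t, f₂ t ≤ M)
    (hf₁sym : ∀ t, f₁ (-t) = f₁ t) (hf₂sym : ∀ t, f₂ (-t) = f₂ t)
    (hf₁prob : ∫ t, f₁ t = 1) (hf₂prob : ∫ t, f₂ t = 1)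
    (hjint : ∀ θ, Integrable (fun x => fjoint f₁ f₂ y θ x))
    (hcpos : ∀ θ, 0 < cnorm f₁ f₂ y θ)
    (d k : ℝ) (hd : 0 < d) (hk : 0 < k)
    (hDUR : ∀ θ : ℝ, k < |θ| → |∫ x, x * post f₁ f₂ y θ x| ≤ |θ| - d)
    (hGTIP : ∃ a > (0 : ℝ), ∃ b > (0 : ℝ), ∀ θ : ℝ, ∀ t : ℝ, 0 ≤ t →
      (∫ x in {x : ℝ | t < |x - θ|}, post f₁ f₂ y θ x) ≤ a * Real.exp (-b * t)) :
    ∃ α₀ > (0 : ℝ), ∀ α : ℝ, 0 < α → α < α₀ →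
      ∃ K : ℝ, 0 < K ∧
        ∀ θ : ℝ, k < |θ| →
          (∫ x, Real.exp (α * |x|) * post f₁ f₂ y θ x) ≤
            Real.exp (α * |θ|) * (1 - α * d / 2) + K := by
  obtain ⟨a, ha, b, hb, hGTIP⟩ := hGTIP
  obtain ⟨α₀, hα₀, K, hK, bound⟩ := dur_gtip_absolute_exponential_moment_bound_general
    (S := {θ | k < |θ|})
    (fun θ _ ↦ .of_forall (post_nonneg (fun t ↦ (hf₁pos t).le) fun t ↦ (hf₂pos t).le))
    (fun θ _ ↦ integral_post (hcpos θ).ne') ha hb hd hDUR fun θ _ ↦ hGTIP θ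
  exact ⟨α₀, hα₀, fun α hα hα_lt ↦ ⟨K, hK, bound α hα hα_lt⟩⟩
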